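/- Let m, A be positive integers and a : {1,…,3m} → ℤ with 4·a(i) > A and 2·a(i) < A for all i and ∑_{i=1}^{3m} a(i) = m·A. Set p_j := (⌊j/2⌋·A, (⌈j/2⌉ mod 2)·A) for j = 0,…,m and let F := ⋃_{j=1}^{m} [p_{j−1}, p_j] ⊆ ℝ² be the zigzag polyline. The following are equivalent: (i) there exist a permutation π of {1,…,3m}, signs ε(i) ∈ {−1,1} and orientations o(i) ∈ {e₁, e₂} such that, with steps v(i) := ε(i)·a(π(i))·o(i) and nodes x_i := p₀ + ∑_{1 ≤ l ≤ i} v(l), every segment [x_{i−1}, x_i] (i = 1,…,3m) is contained in F and x_{3m} = p_m; (ii) {1,…,3m} can be partitioned into m three-element sets each with a-sum A. -/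

import Mathlib

/-- Coercion of an integer point to the real plane. -/
noncomputable def toR : ℤ × ℤ → ℝ × ℝ := fun p => ((p.1 : ℝ), (p.2 : ℝ))

def pos8 (A : ℤ) (i : ℕ) (s : ℤ) : ℤ × ℤ :=
  if i % 2 = 1 then (((i / 2 : ℕ) : ℤ) * A + s, (((i + 1) / 2 % 2 : ℕ) : ℤ) * A)
  else if i % 4 = 0 then (((i / 2 : ℕ) : ℤ) * A, s)
  else (((i / 2 : ℕ) : ℤ) * A, A - s)

def eps8 (i : ℕ) : ℤ := if i % 4 = 2 then -1 else 1
def ori8 (i : ℕ) : ℤ × ℤ := if i % 2 = 1 then (1, 0) else (0, 1)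

lemma mod4_cases8 (i : ℕ) : ∃ q : ℕ, i = 4 * q ∨ i = 4 * q + 1 ∨ i = 4 * q + 2 ∨ i = 4 * q + 3 :=
  ⟨i / 4, by omega⟩

lemma pos8_0 (A : ℤ) (q : ℕ) (s : ℤ) : pos8 A (4 * q) s = (2 * q * A, s) := by
  have h1 : ¬ (4 * q % 2 = 1) := by omega
  have h2 : 4 * q % 4 = 0 := by omega
  have h3 : 4 * q / 2 = 2 * q := by omega
  simp only [pos8, h1, h2, h3]; simp
lemma pos8_1 (A : ℤ) (q : ℕ) (s : ℤ) : pos8 A (4 * q + 1) s = (2 * q * A + s, A) := by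
  have h1 : ((4 * q + 1) % 2 = 1) := by omega
  have h3 : (4 * q + 1) / 2 = 2 * q := by omega
  have h4 : (4 * q + 1 + 1) / 2 % 2 = 1 := by omega
  simp only [pos8, h1, h3, h4]; simp
lemma pos8_2 (A : ℤ) (q : ℕ) (s : ℤ) : pos8 A (4 * q + 2) s = ((2 * q + 1) * A, A - s) := by
  have h1 : ¬ ((4 * q + 2) % 2 = 1) := by omega
  have h2 : ¬ ((4 * q + 2) % 4 = 0) := by omega
  have h3 : (4 * q + 2) / 2 = 2 * q + 1 := by omega
  simp only [pos8, h1, h2, h3]; simp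
lemma pos8_3 (A : ℤ) (q : ℕ) (s : ℤ) : pos8 A (4 * q + 3) s = ((2 * q + 1) * A + s, 0) := by
  have h1 : ((4 * q + 3) % 2 = 1) := by omega
  have h3 : (4 * q + 3) / 2 = 2 * q + 1 := by omega
  have h4 : (4 * q + 3 + 1) / 2 % 2 = 0 := by omega
  simp only [pos8, h1, h3, h4]; simp

lemma pos8_succ (A : ℤ) (i : ℕ) : pos8 A i A = pos8 A (i + 1) 0 := by
  obtain ⟨q, rfl | rfl | rfl | rfl⟩ := mod4_cases8 i
  · simp [pos8_0, pos8_1]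
  · rw [pos8_1, pos8_2]; ext <;> simp; ring
  · rw [pos8_2, pos8_3]; ext <;> simp
  · rw [pos8_3, show 4 * q + 3 + 1 = 4 * (q + 1) by ring, pos8_0]
    ext <;> simp
    ring

lemma pos8_zero (A : ℤ) (j : ℕ) :
    ((((j / 2 : ℕ) : ℤ) * A, (((j + 1) / 2 % 2 : ℕ) : ℤ) * A) : ℤ × ℤ) = pos8 A j 0 := by
  unfold pos8
  split_ifs with h1 h2
  · simp
  · have : (j + 1) / 2 % 2 = 0 := by omega
    simp [this]
  · have : (j + 1) / 2 % 2 = 1 := by omega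
    simp [this]

lemma pos8_add (A : ℤ) (i : ℕ) (s b : ℤ) :
    pos8 A i (s + b) = pos8 A i s + (eps8 i * b) • ori8 i := by
  unfold pos8 eps8 ori8
  split_ifs <;> first | omega | (ext <;> simp <;> ring)

lemma toR_add8 (u v : ℤ × ℤ) : toR (u + v) = toR u + toR v := by
  ext <;> simp [toR]

/-- integer points of a segment -/
lemma seg_int8 (A : ℤ) (hA : 0 < A) (i : ℕ) (u : ℤ × ℤ)
    (h : toR u ∈ segment ℝ (toR (pos8 A i 0)) (toR (pos8 A i A))) :
    ∃ s : ℤ, 0 ≤ s ∧ s ≤ A ∧ u = pos8 A i s := by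
  obtain ⟨x, y, hx, hy, hxy, h⟩ := h
  have hA' : (0:ℝ) < A := by exact_mod_cast hA
  obtain ⟨u1, u2⟩ := u
  have e1 := congrArg Prod.fst h
  have e2 := congrArg Prod.snd h
  have hx' : x = 1 - y := by linarith
  subst hx'
  have hyA : 0 ≤ y * A := by positivity
  have hyA' : y * A ≤ A := by nlinarith
  clear h hxy
  obtain ⟨q, rfl | rfl | rfl | rfl⟩ := mod4_cases8 i
  · simp only [pos8_0, toR, Prod.fst_add, Prod.snd_add, Prod.smul_fst, Prod.smul_snd, smul_eq_mul] at e1 e2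
    push_cast at e1 e2
    have e1' : (u1 : ℝ) = ((2 * q * A : ℤ) : ℝ) := by push_cast; linarith
    have e2' : (u2 : ℝ) = y * A := by linarith
    refine ⟨u2, ?_, ?_, ?_⟩
    · have : (0:ℝ) ≤ u2 := by linarith
      exact_mod_cast this
    · have : (u2:ℝ) ≤ A := by linarith
      exact_mod_cast this
    · rw [pos8_0]; ext
      · exact_mod_cast e1'
      · rfl
  · simp only [pos8_1, toR, Prod.fst_add, Prod.snd_add, Prod.smul_fst, Prod.smul_snd, smul_eq_mul] at e1 e2
    push_cast at e1 e2
    have e1' : ((u1 - 2 * q * A : ℤ) : ℝ) = y * A := by push_cast; linarith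
    have e2' : (u2 : ℝ) = A := by linarith
    refine ⟨u1 - 2 * q * A, ?_, ?_, ?_⟩
    · have : (0:ℝ) ≤ ((u1 - 2 * q * A : ℤ) : ℝ) := by linarith
      exact_mod_cast this
    · have : ((u1 - 2 * q * A : ℤ) : ℝ) ≤ A := by linarith
      exact_mod_cast this
    · rw [pos8_1]; ext
      · simp
      · exact_mod_cast e2'
  · simp only [pos8_2, toR, Prod.fst_add, Prod.snd_add, Prod.smul_fst, Prod.smul_snd, smul_eq_mul] at e1 e2
    push_cast at e1 e2
    have e1' : (u1 : ℝ) = (((2 * q + 1) * A : ℤ) : ℝ) := by push_cast; linarith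
    have e2' : ((A - u2 : ℤ) : ℝ) = y * A := by push_cast; linarith
    refine ⟨A - u2, ?_, ?_, ?_⟩
    · have : (0:ℝ) ≤ ((A - u2 : ℤ) : ℝ) := by linarith
      exact_mod_cast this
    · have : ((A - u2 : ℤ) : ℝ) ≤ A := by linarith
      exact_mod_cast this
    · rw [pos8_2]; ext
      · exact_mod_cast e1'
      · simp
  · simp only [pos8_3, toR, Prod.fst_add, Prod.snd_add, Prod.smul_fst, Prod.smul_snd, smul_eq_mul] at e1 e2
    push_cast at e1 e2
    have e1' : ((u1 - (2 * q + 1) * A : ℤ) : ℝ) = y * A := by push_cast; linarith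
    have e2' : (u2 : ℝ) = 0 := by linarith
    refine ⟨u1 - (2 * q + 1) * A, ?_, ?_, ?_⟩
    · have : (0:ℝ) ≤ ((u1 - (2 * q + 1) * A : ℤ) : ℝ) := by linarith
      exact_mod_cast this
    · have : ((u1 - (2 * q + 1) * A : ℤ) : ℝ) ≤ A := by linarith
      exact_mod_cast this
    · rw [pos8_3]; ext
      · simp
      · exact_mod_cast e2'

lemma pos_mem_seg8 (A : ℤ) (hA : 0 < A) (i : ℕ) (s : ℤ) (h0 : 0 ≤ s) (h1 : s ≤ A) :
    toR (pos8 A i s) ∈ segment ℝ (toR (pos8 A i 0)) (toR (pos8 A i A)) := by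
  have hA' : (0:ℝ) < A := by exact_mod_cast hA
  have h0' : (0:ℝ) ≤ s := by exact_mod_cast h0
  have h1' : (s:ℝ) ≤ A := by exact_mod_cast h1
  refine ⟨1 - s / A, s / A, ?_, by positivity, by ring, ?_⟩
  · have : (s:ℝ) / A ≤ 1 := by rw [div_le_one hA']; exact h1'
    linarith
  · unfold pos8
    split_ifs <;> ext <;> simp [toR] <;> field_simp <;> ring

lemma key_le8 (A : ℤ) (hA : 0 < A) (i j : ℕ) (hij : i ≤ j) (s s' d : ℤ) (hs : 0 ≤ s) (hs1 : s ≤ A)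
    (hs' : 0 ≤ s') (hs1' : s' ≤ A) (hd : 2 * d < A)
    (h : ((pos8 A i s).1 = (pos8 A j s').1 ∧ |(pos8 A i s).2 - (pos8 A j s').2| = d) ∨
      ((pos8 A i s).2 = (pos8 A j s').2 ∧ |(pos8 A i s).1 - (pos8 A j s').1| = d)) :
    |(i * A + s) - (j * A + s')| ≤ d ∧
      ∃ k : ℤ, k * A ≤ i * A + s ∧ k * A ≤ j * A + s' ∧ i * A + s ≤ (k + 1) * A ∧
        j * A + s' ≤ (k + 1) * A := by
  rcases Nat.eq_or_lt_of_le hij with rfl | hlt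
  · constructor
    · have : (i * A + s) - (i * A + s') = s - s' := by ring
      rw [this]
      unfold pos8 at h
      split_ifs at h <;> simp at h <;> grind
    · exact ⟨i, by linarith, by linarith, by linarith, by linarith⟩
  rcases Nat.eq_or_lt_of_le (Nat.succ_le_of_lt hlt) with rfl | hlt2
  · have hc : (s = A ∧ s' ≤ d) ∨ (s' = 0 ∧ A - s ≤ d) := by
      obtain ⟨q, rfl | rfl | rfl | rfl⟩ := mod4_cases8 i
      · simp only [Nat.succ_eq_add_one, pos8_0, pos8_1] at h; grind
      · simp only [Nat.succ_eq_add_one, pos8_1, show 4 * q + 1 + 1 = 4 * q + 2 by ring, pos8_2] at h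
        grind
      · simp only [Nat.succ_eq_add_one, pos8_2, show 4 * q + 2 + 1 = 4 * q + 3 by ring, pos8_3] at h
        grind
      · simp only [Nat.succ_eq_add_one, pos8_3, show 4 * q + 3 + 1 = 4 * (q + 1) by ring, pos8_0] at h
        push_cast at h
        grind
    push_cast
    rcases hc with ⟨rfl, hc⟩ | ⟨rfl, hc⟩
    · refine ⟨by rw [abs_le]; constructor <;> linarith, i + 1, ?_, ?_, ?_, ?_⟩ <;> linarith
    · refine ⟨by rw [abs_le]; constructor <;> linarith, i, ?_, ?_, ?_, ?_⟩ <;> linarith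
  · exfalso
    obtain ⟨q, hq⟩ := mod4_cases8 i
    obtain ⟨r, hr⟩ := mod4_cases8 j
    have hqr : q ≤ r := by omega
    obtain ⟨e, rfl⟩ := Nat.exists_eq_add_of_le hqr
    have hx : |(pos8 A i s).1 - (pos8 A j s').1| ≤ d := by
      rcases h with h | h
      · rw [h.1, sub_self, abs_zero, ← h.2]; positivity
      · exact h.2.le
    have hy : |(pos8 A i s).2 - (pos8 A j s').2| ≤ d := by
      rcases h with h | h
      · exact h.2.le
      · rw [h.1, sub_self, abs_zero, ← h.2]; positivity
    clear h
    have he : (0:ℤ) ≤ e * A := by positivity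
    have he1 : 1 ≤ e → A ≤ e * A := by
      intro h
      have : (1:ℤ) ≤ e := by exact_mod_cast h
      nlinarith
    have he2 : 2 ≤ e → 2 * A ≤ e * A := by
      intro h
      have : (2:ℤ) ≤ e := by exact_mod_cast h
      nlinarith
    rw [abs_le] at hx hy
    rcases hq with rfl | rfl | rfl | rfl <;> rcases hr with rfl | rfl | rfl | rfl <;>
      simp only [pos8_0, pos8_1, pos8_2, pos8_3] at hx hy <;> push_cast at hx hy <;>
      first
      | linarith
      | (have := he1 (by omega); linarith)
      | (have := he2 (by omega); linarith)

lemma key8 (A : ℤ) (hA : 0 < A) (i j : ℕ) (s s' d : ℤ) (hs : 0 ≤ s) (hs1 : s ≤ A)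
    (hs' : 0 ≤ s') (hs1' : s' ≤ A) (hd : 2 * d < A)
    (h : ((pos8 A i s).1 = (pos8 A j s').1 ∧ |(pos8 A i s).2 - (pos8 A j s').2| = d) ∨
      ((pos8 A i s).2 = (pos8 A j s').2 ∧ |(pos8 A i s).1 - (pos8 A j s').1| = d)) :
    |(i * A + s) - (j * A + s')| ≤ d ∧
      ∃ k : ℤ, k * A ≤ i * A + s ∧ k * A ≤ j * A + s' ∧ i * A + s ≤ (k + 1) * A ∧
        j * A + s' ≤ (k + 1) * A := by
  rcases le_total i j with hij | hij
  · exact key_le8 A hA i j hij s s' d hs hs1 hs' hs1' hd h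
  · obtain ⟨h1, k, h2, h3, h4, h5⟩ := key_le8 A hA j i hij s' s d hs' hs1' hs hs1 hd
      (by rw [abs_sub_comm, eq_comm, abs_sub_comm (pos8 A j s').1, eq_comm (a := (pos8 A j s').2)]
          exact h)
    exact ⟨by rw [abs_sub_comm]; exact h1, k, h3, h2, h5, h4⟩

lemma comb8 (m : ℕ) (A : ℤ) (hA : 0 < A) (b : ℕ → ℤ) (h4 : ∀ t < 3 * m, A < 4 * b t)
    (h2 : ∀ t < 3 * m, 2 * b t < A) (S : ℕ → ℤ) (hS0 : S 0 = 0)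
    (hS : ∀ t < 3 * m, S (t + 1) = S t + b t)
    (hSm : S (3 * m) = m * A)
    (hk : ∀ t < 3 * m, ∃ k : ℤ, k * A ≤ S t ∧ S (t + 1) ≤ (k + 1) * A) :
    ∀ j ≤ m, S (3 * j) = j * A := by
  intro j
  induction j with
  | zero => intro _; simp [hS0]
  | succ j ih =>
    intro hj
    have ih := ih (by omega)
    have aux : ∀ t < 3 * m, S t < (j + 1) * A → S (t + 1) ≤ (j + 1) * A := by
      intro t ht h
      obtain ⟨k, hk1, hk2⟩ := hk t ht
      have : k < j + 1 := by
        by_contra hc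
        push Not at hc
        nlinarith
      have : k + 1 ≤ j + 1 := by omega
      nlinarith
    have s1 := hS (3 * j) (by omega)
    have s2 := hS (3 * j + 1) (by omega)
    have s3 := hS (3 * j + 2) (by omega)
    have a1 := h4 (3 * j) (by omega)
    have a2 := h4 (3 * j + 1) (by omega)
    have a3 := h4 (3 * j + 2) (by omega)
    have b1 := h2 (3 * j) (by omega)
    have b2 := h2 (3 * j + 1) (by omega)
    have c := aux (3 * j + 2) (by omega) (by linarith)
    rw [show 3 * (j + 1) = 3 * j + 2 + 1 by ring]
    push_cast
    refine le_antisymm c ?_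
    by_contra hc
    push Not at hc
    rcases Nat.eq_or_lt_of_le hj with e | hlt
    · rw [← e, show 3 * (j + 1) = 3 * j + 2 + 1 by ring] at hSm
      push_cast at hSm
      linarith
    · have s4 := hS (3 * j + 2 + 1) (by omega)
      have a4 := h4 (3 * j + 2 + 1) (by omega)
      have := aux (3 * j + 2 + 1) (by omega) hc
      linarith

lemma sum_filter_succ8 {M : Type*} [AddCommMonoid M] (n t : ℕ) (h : t < n) (f : Fin n → M) :
    ∑ i ∈ Finset.univ.filter (fun i : Fin n => (i : ℕ) < t + 1), f i =
    ∑ i ∈ Finset.univ.filter (fun i : Fin n => (i : ℕ) < t), f i + f ⟨t, h⟩ := by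
  have : Finset.univ.filter (fun i : Fin n => (i : ℕ) < t + 1) =
      insert ⟨t, h⟩ (Finset.univ.filter (fun i : Fin n => (i : ℕ) < t)) := by
    ext i; simp [Fin.ext_iff]; omega
  rw [this, Finset.sum_insert (by simp), add_comm]

/-- index 3j+k -/
def idx8 (m : ℕ) : Fin m × Fin 3 ≃ Fin (3 * m) :=
  finProdFinEquiv.trans (finCongr (by ring))

lemma idx8_val (m : ℕ) (j : Fin m) (k : Fin 3) : ((idx8 m (j, k) : Fin (3 * m)) : ℕ) = 3 * j + k := by
  simp [idx8, finProdFinEquiv]; ring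

lemma part_of_equiv8 (m : ℕ) (A : ℤ) (a : Fin (3 * m) → ℤ) (e : Fin m × Fin 3 ≃ Fin (3 * m))
    (h : ∀ j, ∑ k, a (e (j, k)) = A) :
    (∃ P : Finpartition (Finset.univ : Finset (Fin (3 * m))),
      P.parts.card = m ∧ ∀ q ∈ P.parts, q.card = 3 ∧ ∑ i ∈ q, a i = A) := by
  classical
  let g : Fin m → Finset (Fin (3 * m)) := fun j => Finset.univ.image (fun k => e (j, k))
  have hmem : ∀ j i, i ∈ g j ↔ (e.symm i).1 = j := by
    intro j i
    simp only [g, Finset.mem_image, Finset.mem_univ, true_and]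
    constructor
    · rintro ⟨k, rfl⟩; simp
    · rintro rfl; exact ⟨(e.symm i).2, by simp⟩
  have hinj : Function.Injective g := by
    intro j j' hjj
    have h1 : e (j, 0) ∈ g j := by rw [hmem]; simp
    rw [hjj, hmem] at h1
    simpa using h1
  have hki : ∀ j, Function.Injective (fun k => e (j, k)) := by
    intro j k k' hk
    simpa using hk
  refine ⟨{ parts := Finset.univ.image g, supIndep := ?_, sup_parts := ?_, bot_notMem := ?_ }, ?_, ?_⟩
  · rw [Finset.supIndep_iff_pairwiseDisjoint]
    intro x hx y hy hxy
    simp only [Finset.coe_image, Finset.coe_univ, Set.image_univ, Set.mem_range] at hx hy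
    obtain ⟨j, rfl⟩ := hx
    obtain ⟨j', rfl⟩ := hy
    simp only [Function.onFun, id]
    rw [Finset.disjoint_left]
    intro i hi hi'
    rw [hmem] at hi hi'
    exact hxy (by rw [← hi, ← hi'])
  · ext i
    simp only [Finset.mem_sup, Finset.mem_image, Finset.mem_univ, true_and, iff_true, id]
    exact ⟨_, ⟨(e.symm i).1, rfl⟩, by rw [hmem]⟩
  · simp only [Finset.mem_image, Finset.mem_univ, true_and, not_exists]
    intro j hj
    have h1 : e (j, 0) ∈ g j := by rw [hmem]; simp
    rw [hj] at h1
    simp at h1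
  · simp [Finset.card_image_of_injective _ hinj]
  · intro q hq
    simp only [Finset.mem_image, Finset.mem_univ, true_and] at hq
    obtain ⟨j, rfl⟩ := hq
    constructor
    · simp [g, Finset.card_image_of_injective _ (hki j)]
    · rw [Finset.sum_image (fun x _ y _ hxy => hki j hxy)]
      exact h j

lemma equiv_of_part8 (m : ℕ) (A : ℤ) (a : Fin (3 * m) → ℤ)
    (P : Finpartition (Finset.univ : Finset (Fin (3 * m))))
    (hc : P.parts.card = m) (hP : ∀ q ∈ P.parts, q.card = 3 ∧ ∑ i ∈ q, a i = A) :
    ∃ e : Fin m × Fin 3 ≃ Fin (3 * m), ∀ j, ∑ k, a (e (j, k)) = A := by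
  classical
  let e1 : Fin m ≃ P.parts := (Finset.equivFinOfCardEq hc).symm
  let e2 : ∀ j : Fin m, Fin 3 ≃ (e1 j).1 :=
    fun j => (Finset.equivFinOfCardEq (hP _ (e1 j).2).1).symm
  let f : Fin m × Fin 3 → Fin (3 * m) := fun x => (e2 x.1 x.2).1
  have hf : Function.Injective f := by
    rintro ⟨j, k⟩ ⟨j', k'⟩ h
    have hj : j = j' := by
      apply e1.injective
      apply Subtype.ext
      refine P.disjoint.elim_finset (e1 j).2 (e1 j').2 (f (j, k)) (e2 j k).2 ?_
      rw [h]; exact (e2 j' k').2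
    subst hj
    have : e2 j k = e2 j k' := Subtype.ext h
    simpa using this
  have hb : Function.Bijective f := by
    rw [Fintype.bijective_iff_injective_and_card]
    exact ⟨hf, by simp; ring⟩
  refine ⟨Equiv.ofBijective f hb, fun j => ?_⟩
  rw [← (hP _ (e1 j).2).2, ← Finset.sum_coe_sort (e1 j).1]
  exact Equiv.sum_comp (e2 j) (fun i => a i.1)

/-- Zero-error variant of the DPA-S hardness reduction (Corollary 1): an
axis-aligned path from `p 0` to `p m` using each strut length `a i` exactly
once that exactly overlays the zigzag polyline `F` (every segment of the path
is contained in `F`) exists iff `Fin (3m)` can be partitioned into `m`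
three-element sets each with `a`-sum `A`. (Steps are indexed 0-based:
`X t` is the node after the first `t` steps.) -/
theorem stmt_8 (m : ℕ) (hm : 0 < m) (A : ℤ) (hA : 0 < A)
    (a : Fin (3 * m) → ℤ)
    (h4 : ∀ i, 4 * a i > A) (h2 : ∀ i, 2 * a i < A)
    (hsum : ∑ i, a i = (m : ℤ) * A)
    (p : ℕ → ℤ × ℤ)
    (hp : ∀ j, p j = (((j / 2 : ℕ) : ℤ) * A, (((j + 1) / 2 % 2 : ℕ) : ℤ) * A))
    (F : Set (ℝ × ℝ))
    (hF : F = ⋃ j ∈ Finset.Icc 1 m, segment ℝ (toR (p (j - 1))) (toR (p j))) :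
    (∃ (π : Equiv.Perm (Fin (3 * m))) (ε : Fin (3 * m) → ℤ)
        (o : Fin (3 * m) → ℤ × ℤ) (X : ℕ → ℝ × ℝ),
      (∀ i, ε i = 1 ∨ ε i = -1) ∧
      (∀ i, o i = (1, 0) ∨ o i = (0, 1)) ∧
      (∀ t : ℕ, X t = toR (p 0) + toR (∑ i ∈ Finset.univ.filter
          (fun i : Fin (3 * m) => (i : ℕ) < t), (ε i * a (π i)) • o i)) ∧
      (∀ i : ℕ, 1 ≤ i → i ≤ 3 * m → segment ℝ (X (i - 1)) (X i) ⊆ F) ∧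
      X (3 * m) = toR (p m)) ↔
    (∃ P : Finpartition (Finset.univ : Finset (Fin (3 * m))),
      P.parts.card = m ∧ ∀ q ∈ P.parts, q.card = 3 ∧ ∑ i ∈ q, a i = A) := by
  have hp' : ∀ j, p j = pos8 A j 0 := fun j => by rw [hp, pos8_zero]
  have hp0 : p 0 = 0 := by rw [hp]; simp
  have hFmem : ∀ z, z ∈ F ↔ ∃ i < m, z ∈ segment ℝ (toR (pos8 A i 0)) (toR (pos8 A i A)) := by
    intro z
    rw [hF]
    simp only [Set.mem_iUnion, Finset.mem_Icc, exists_prop]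
    constructor
    · rintro ⟨j, ⟨h1, h2⟩, h⟩
      refine ⟨j - 1, by omega, ?_⟩
      rw [pos8_succ, show j - 1 + 1 = j by omega, ← hp', ← hp']
      exact h
    · rintro ⟨i, hi, h⟩
      refine ⟨i + 1, ⟨by omega, by omega⟩, ?_⟩
      rw [pos8_succ, ← hp', ← hp'] at h
      simpa using h
  constructor
  · rintro ⟨π, ε, o, X, hε, ho, hX, hseg, hend⟩
    set x : ℕ → ℤ × ℤ := fun t => ∑ i ∈ Finset.univ.filter
          (fun i : Fin (3 * m) => (i : ℕ) < t), (ε i * a (π i)) • o i with hx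
    have hXx : ∀ t, X t = toR (x t) := by
      intro t; rw [hX, hp0, ← toR_add8, zero_add]
    have hx0 : x 0 = 0 := by simp [hx]
    have hxs : ∀ t (ht : t < 3 * m), x (t + 1) = x t + (ε ⟨t, ht⟩ * a (π ⟨t, ht⟩)) • o ⟨t, ht⟩ :=
      fun t ht => sum_filter_succ8 (3 * m) t ht _
    have hxm : x (3 * m) = pos8 A m 0 := by
      rw [hXx, hp'] at hend
      have e1 := congrArg Prod.fst hend
      have e2 := congrArg Prod.snd hend
      simp only [toR] at e1 e2
      ext
      · exact_mod_cast e1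
      · exact_mod_cast e2
    have hrep : ∀ t ≤ 3 * m, ∃ (i : ℕ) (s : ℤ), 0 ≤ s ∧ s ≤ A ∧ x t = pos8 A i s := by
      intro t ht
      have : toR (x t) ∈ F := by
        rcases Nat.eq_zero_or_pos t with rfl | h0
        · have := hseg 1 le_rfl (by omega) (left_mem_segment ℝ _ _)
          rwa [hXx] at this
        · have := hseg t h0 ht (right_mem_segment ℝ _ _)
          rwa [hXx] at this
      rw [hFmem] at this
      obtain ⟨i, -, h⟩ := this
      obtain ⟨s, h⟩ := seg_int8 A hA i _ h
      exact ⟨i, s, h⟩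
    choose! I s hs0 hs1 hxI using hrep
    set Lf : ℕ → ℤ := fun t => I t * A + s t with hLf
    have hL0 : Lf 0 = 0 := by
      have e : pos8 A (I 0) (s 0) = pos8 A 0 0 := by
        rw [← hxI 0 (by omega), hx0, ← hp', hp0]
      have := (key8 A hA (I 0) 0 (s 0) 0 0 (hs0 0 (by omega)) (hs1 0 (by omega)) le_rfl hA.le
        (by linarith) (by rw [e]; simp)).1
      have := abs_nonpos_iff.1 this
      push_cast at this
      simp only [hLf]; linarith
    have hLm : Lf (3 * m) = m * A := by
      have e : pos8 A (I (3 * m)) (s (3 * m)) = pos8 A m 0 := by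
        rw [← hxI (3 * m) le_rfl, hxm]
      have := (key8 A hA (I (3 * m)) m (s (3 * m)) 0 0 (hs0 _ le_rfl) (hs1 _ le_rfl) le_rfl hA.le
        (by linarith) (by rw [e]; simp)).1
      have := abs_nonpos_iff.1 this
      simp only [hLf]; linarith
    have hstep : ∀ t (ht : t < 3 * m), |Lf t - Lf (t + 1)| ≤ a (π ⟨t, ht⟩) ∧
        ∃ k : ℤ, k * A ≤ Lf t ∧ k * A ≤ Lf (t + 1) ∧ Lf t ≤ (k + 1) * A ∧
          Lf (t + 1) ≤ (k + 1) * A := by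
      intro t ht
      have hpos : 0 < a (π ⟨t, ht⟩) := by have := h4 (π ⟨t, ht⟩); linarith
      refine key8 A hA (I t) (I (t + 1)) (s t) (s (t + 1)) _ (hs0 t ht.le) (hs1 t ht.le)
        (hs0 _ ht) (hs1 _ ht) (h2 _) ?_
      rw [← hxI t ht.le, ← hxI (t + 1) ht, hxs t ht]
      rcases ho ⟨t, ht⟩ with h | h <;> rcases hε ⟨t, ht⟩ with h' | h' <;> rw [h, h'] <;>
        simp [abs_of_pos hpos]
    set S : ℕ → ℤ := fun t => ∑ i ∈ Finset.univ.filter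
          (fun i : Fin (3 * m) => (i : ℕ) < t), a (π i) with hS
    have hS0 : S 0 = 0 := by simp [hS]
    have hSs : ∀ t (ht : t < 3 * m), S (t + 1) = S t + a (π ⟨t, ht⟩) :=
      fun t ht => sum_filter_succ8 (3 * m) t ht _
    have hSm : S (3 * m) = m * A := by
      rw [← hsum, ← Equiv.sum_comp π]
      simp only [hS]
      congr 1
      ext i; simp
    have hup : ∀ t ≤ 3 * m, Lf t ≤ S t := by
      intro t
      induction t with
      | zero => intro _; rw [hL0, hS0]
      | succ t ih =>
        intro ht
        have h1 := ih (by omega)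
        have h2 := (abs_le.1 (hstep t ht).1).1
        rw [hSs t ht]; linarith
    have hdown : ∀ t ≤ 3 * m, S (3 * m - t) ≤ Lf (3 * m - t) := by
      intro t
      induction t with
      | zero => intro _; simp only [Nat.sub_zero]; rw [hLm, hSm]
      | succ t ih =>
        intro ht
        have h1 := ih (by omega)
        have hlt : 3 * m - (t + 1) < 3 * m := by omega
        have h2 := (abs_le.1 (hstep _ hlt).1).1
        have h3 := hSs _ hlt
        rw [show 3 * m - (t + 1) + 1 = 3 * m - t by omega] at h2 h3
        linarith
    have hLS : ∀ t ≤ 3 * m, Lf t = S t := by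
      intro t ht
      have := hdown (3 * m - t) (by omega)
      rw [show 3 * m - (3 * m - t) = t by omega] at this
      exact le_antisymm (hup t ht) this
    have hcomb := comb8 m A hA (fun t => if h : t < 3 * m then a (π ⟨t, h⟩) else 0)
      (fun t ht => by simp only [ht, dif_pos]; exact h4 _)
      (fun t ht => by simp only [ht, dif_pos]; exact h2 _) S hS0
      (fun t ht => by simp only [ht, dif_pos]; exact hSs t ht) hSm
      (fun t ht => by
        obtain ⟨-, k, k1, -, -, k2⟩ := hstep t ht
        rw [hLS t ht.le] at k1
        rw [hLS _ ht] at k2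
        exact ⟨k, k1, k2⟩)
    refine part_of_equiv8 m A a ((idx8 m).trans π) ?_
    intro j
    have hj := j.2
    have c0 := hcomb j hj.le
    have c1 := hcomb (j + 1) hj
    have d0 := hSs (3 * j) (by omega)
    have d1 := hSs (3 * j + 1) (by omega)
    have d2 := hSs (3 * j + 2) (by omega)
    rw [show 3 * ((j : ℕ) + 1) = 3 * j + 2 + 1 by ring] at c1
    push_cast at c1
    have i0 : idx8 m (j, 0) = ⟨3 * j, by omega⟩ := by ext; rw [idx8_val]; simp
    have i1 : idx8 m (j, 1) = ⟨3 * j + 1, by omega⟩ := by ext; rw [idx8_val]; simp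
    have i2 : idx8 m (j, 2) = ⟨3 * j + 2, by omega⟩ := by ext; rw [idx8_val]; simp
    rw [Fin.sum_univ_three]
    simp only [Equiv.trans_apply, i0, i1, i2]
    linarith
  · rintro ⟨P, hPc, hP⟩
    obtain ⟨e, he⟩ := equiv_of_part8 m A a P hPc hP
    set π : Equiv.Perm (Fin (3 * m)) := (idx8 m).symm.trans e with hπ
    set S : ℕ → ℤ := fun t => ∑ i ∈ Finset.univ.filter
          (fun i : Fin (3 * m) => (i : ℕ) < t), a (π i) with hS
    have hapos : ∀ i, 0 < a i := fun i => by have := h4 i; linarith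
    have hS0 : S 0 = 0 := by simp [hS]
    have hSs : ∀ t (ht : t < 3 * m), S (t + 1) = S t + a (π ⟨t, ht⟩) :=
      fun t ht => sum_filter_succ8 (3 * m) t ht _
    have hS3' : ∀ j (hj : j < m), S (3 * j + 2 + 1) = S (3 * j) + A := by
      intro j hj
      have d0 := hSs (3 * j) (by omega)
      have d1 := hSs (3 * j + 1) (by omega)
      have d2 := hSs (3 * j + 2) (by omega)
      have i0 : (⟨3 * j, by omega⟩ : Fin (3 * m)) = idx8 m (⟨j, hj⟩, 0) := by ext; rw [idx8_val]; simp
      have i1 : (⟨3 * j + 1, by omega⟩ : Fin (3 * m)) = idx8 m (⟨j, hj⟩, 1) := by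
        ext; rw [idx8_val]; simp
      have i2 : (⟨3 * j + 2, by omega⟩ : Fin (3 * m)) = idx8 m (⟨j, hj⟩, 2) := by
        ext; rw [idx8_val]; simp
      have := he ⟨j, hj⟩
      rw [Fin.sum_univ_three] at this
      rw [i0] at d0
      rw [i1] at d1
      rw [i2] at d2
      simp only [hπ, Equiv.trans_apply, Equiv.symm_apply_apply] at d0 d1 d2
      linarith
    have hS3 : ∀ j ≤ m, S (3 * j) = j * A := by
      intro j
      induction j with
      | zero => intro _; simp [hS0]
      | succ j ih =>
        intro hj
        have := hS3' j hj
        rw [ih (by omega)] at this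
        rw [show 3 * (j + 1) = 3 * j + 2 + 1 by ring, this]
        push_cast; ring
    have hmono : Monotone S := by
      intro t t' h
      simp only [hS]
      apply Finset.sum_le_sum_of_subset_of_nonneg
      · intro i; simp; omega
      · intro i _ _; exact (hapos _).le
    have hlo : ∀ t ≤ 3 * m, ((t / 3 : ℕ) : ℤ) * A ≤ S t := by
      intro t ht
      rw [← hS3 _ (by omega)]
      exact hmono (by omega)
    have hhi : ∀ t t', t < 3 * m → t' ≤ 3 * (t / 3) + 3 → S t' ≤ ((t / 3 : ℕ) : ℤ) * A + A := by
      intro t t' ht ht'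
      have := hS3 (t / 3 + 1) (by omega)
      push_cast at this
      have h2 : S t' ≤ S (3 * (t / 3 + 1)) := hmono (by omega)
      push_cast
      linarith
    have hpath : ∀ t ≤ 3 * m, (∑ i ∈ Finset.univ.filter
          (fun i : Fin (3 * m) => (i : ℕ) < t), (eps8 ((i : ℕ) / 3) * a (π i)) • ori8 ((i : ℕ) / 3))
          = pos8 A (t / 3) (S t - ((t / 3 : ℕ) : ℤ) * A) ∧ (∀ ht : t < 3 * m,
          (∑ i ∈ Finset.univ.filter
          (fun i : Fin (3 * m) => (i : ℕ) < t + 1), (eps8 ((i : ℕ) / 3) * a (π i)) • ori8 ((i : ℕ) / 3))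
          = pos8 A (t / 3) (S (t + 1) - ((t / 3 : ℕ) : ℤ) * A)) := by
      intro t
      have main : ∀ t (ht : t < 3 * m), (∑ i ∈ Finset.univ.filter
          (fun i : Fin (3 * m) => (i : ℕ) < t), (eps8 ((i : ℕ) / 3) * a (π i)) • ori8 ((i : ℕ) / 3))
          = pos8 A (t / 3) (S t - ((t / 3 : ℕ) : ℤ) * A) → 
          (∑ i ∈ Finset.univ.filter
          (fun i : Fin (3 * m) => (i : ℕ) < t + 1), (eps8 ((i : ℕ) / 3) * a (π i)) • ori8 ((i : ℕ) / 3))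
          = pos8 A (t / 3) (S (t + 1) - ((t / 3 : ℕ) : ℤ) * A) := by
        intro t ht h
        rw [sum_filter_succ8 (3 * m) t ht, h, ← pos8_add, hSs t ht]
        congr 1; ring
      intro ht
      refine (fun h => ⟨h, fun ht => main t ht h⟩) ?_
      induction t with
      | zero => simp [hS0, ← hp', hp0]
      | succ t ih =>
        rw [main t ht (ih (by omega))]
        by_cases h3 : (t + 1) / 3 = t / 3
        · rw [h3]
        · have h4 : (t + 1) / 3 = t / 3 + 1 := by omega
          have h5 : t + 1 = 3 * (t / 3 + 1) := by omega
          have h6 : S (t + 1) = ((t / 3 + 1 : ℕ) : ℤ) * A := by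
            rw [h5, hS3 _ (by omega)]
          rw [h4, h6, sub_self, ← pos8_succ]
          congr 1; push_cast; ring
    refine ⟨π, fun i => eps8 ((i : ℕ) / 3), fun i => ori8 ((i : ℕ) / 3), _, ?_, ?_,
      fun t => rfl, ?_, ?_⟩
    · intro i; simp only [eps8]; split_ifs <;> simp
    · intro i; simp only [ori8]; split_ifs <;> simp
    · intro i hi1 hi2
      obtain ⟨t, rfl⟩ : ∃ t, i = t + 1 := ⟨i - 1, by omega⟩
      have ht : t < 3 * m := by omega
      rw [Nat.add_sub_cancel, (hpath t ht.le).1, (hpath t ht.le).2 ht, hp0]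
      rw [← toR_add8, ← toR_add8, zero_add, zero_add]
      have l1 := hlo t ht.le
      have l2 : S t ≤ S (t + 1) := hmono (by omega)
      have l3 := hhi t t ht (by omega)
      have l4 := hhi t (t + 1) ht (by omega)
      intro z hz
      rw [hFmem]
      refine ⟨t / 3, by omega, ?_⟩
      exact (convex_segment _ _).segment_subset
        (pos_mem_seg8 A hA _ _ (by linarith) (by linarith))
        (pos_mem_seg8 A hA _ _ (by linarith) (by linarith)) hz
    · beta_reduce
      rw [(hpath (3 * m) le_rfl).1, hp0, ← toR_add8, zero_add, hp', hS3 m le_rfl,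
        show 3 * m / 3 = m by omega, sub_self]
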